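/- arXiv:1204.4520 — 3 statements merged into one kernel-verified Lean document; each statement's English description precedes it below -/
import Mathlib

section
/- Let S be a commutative local Noetherian ring whose residue field has characteristic p, where p is a prime, let G be a finite group and let P be a Sylow p-subgroup of G. A finitely generated module M over the group ring S[G] is projective as an S[G]-module if and only if the S[P]-module obtained from M by restriction of scalars along the inclusion S[P] ⊆ S[G] is projective as an S[P]-module. -/
/-!
Restriction to `S[H]` preserves projectivity for every subgroup `H`, because a right transversal
of `H` is a basis of `S[G]` over `S[H]`. Conversely, if `H` has finite index and `M` is projective
over `S[H]`, a surjection `π` from a free `S[G]`-module onto `M` has an `S[H]`-linear section `s`.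
The map `m ↦ ∑ g • s (g⁻¹ • m)`, summed over the cosets `gH`, is `S[G]`-linear, and composing it
with `π` gives multiplication by `|G : H|`; when the index is invertible in `S`, this makes `M` a
direct summand of the free module. The index of a Sylow `p`-subgroup is prime to `p`, hence a unit
in a local ring of residue characteristic `p`.
-/

open scoped MonoidAlgebra

section Projective

variable {R A M N : Type*} [Semiring R] [Semiring A] [AddCommMonoid M] [AddCommMonoid N]

theorem projective_finsupp (ι : Type*) [Module R M] [Module.Projective R M] :
    Module.Projective R (ι →₀ M) := by
  classical exact .of_equiv' (finsuppLequivDFinsupp R).symm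

theorem projective_trans [Module R A] [IsScalarTower R A A] [Module A M] [Module R M]
    [IsScalarTower R A M] [Module.Projective R A] [Module.Projective A M] :
    Module.Projective R M := by
  obtain ⟨s, hs⟩ := Module.projective_def'.1 ‹Module.Projective A M›
  have := projective_finsupp (R := R) (M := A) M
  exact .of_split (s.restrictScalars R)
    ((Finsupp.linearCombination A (id : M → M)).restrictScalars R)
    (LinearMap.ext fun m ↦ LinearMap.congr_fun hs m)

theorem projective_of_bijective_comp [Module A M] [Module A N] [Module.Projective A N]
    (i : M →ₗ[A] N) (π : N →ₗ[A] M) (h : Function.Bijective (π ∘ₗ i)) :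
    Module.Projective A M :=
  let e := LinearEquiv.ofBijective (π ∘ₗ i) h
  .of_split (i ∘ₗ e.symm.toLinearMap) π (LinearMap.ext e.apply_symm_apply)

theorem bijective_nsmul_of_isUnit [Module A M] {n : ℕ} (hn : IsUnit (n : A)) :
    Function.Bijective fun m : M ↦ n • m := by
  simpa only [Units.smul_def, IsUnit.unit_spec, Nat.cast_smul_eq_nsmul] using
    MulAction.bijective (β := M) hn.unit

end Projective

section Subgroup

variable {S G : Type*} [Semiring S] [Group G] {H : Subgroup G}

/-- The left `S[H]`-module structure on `S[G]` given by the inclusion `S[H] → S[G]`. With respect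
to it, `IsScalarTower S[H] S[G] M` expresses that the `S[H]`-module `M` is the restriction of the
`S[G]`-module `M`. -/
noncomputable abbrev subgroupAlgebraModule : Module S[H] S[G] :=
  Module.compHom S[G] (MonoidAlgebra.mapDomainRingHom S H.subtype)

attribute [local instance] subgroupAlgebraModule

theorem isScalarTower_compHom_subtype (M : Type*) [AddCommMonoid M] [Module S[G] M] :
    letI : Module S[H] M := Module.compHom M (MonoidAlgebra.mapDomainRingHom S H.subtype)
    IsScalarTower S[H] S[G] M :=
  letI : Module S[H] M := Module.compHom M (MonoidAlgebra.mapDomainRingHom S H.subtype)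
  ⟨fun a x m ↦ mul_smul (MonoidAlgebra.mapDomainRingHom S H.subtype a) x m⟩

instance isScalarTower_subgroupAlgebra : IsScalarTower S[H] S[G] S[G] :=
  isScalarTower_compHom_subtype S[G]

section Restriction

variable {M : Type*} [AddCommMonoid M] [Module S[G] M] [Module S[H] M] [IsScalarTower S[H] S[G] M]

theorem single_smul_eq_single_coe_smul (h : H) (r : S) (m : M) :
    (MonoidAlgebra.single h r : S[H]) • m = (MonoidAlgebra.single (h : G) r : S[G]) • m := by
  rw [← smul_one_smul S[G] (MonoidAlgebra.single h r) m]
  change (MonoidAlgebra.mapDomainRingHom S H.subtype (MonoidAlgebra.single h r) * 1) • m = _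
  simp

theorem map_single_coe_smul {N : Type*} [AddCommMonoid N] [Module S[G] N] [Module S[H] N]
    [IsScalarTower S[H] S[G] N] (f : M →ₗ[S[H]] N) (h : H) (r : S) (m : M) :
    f ((MonoidAlgebra.single (h : G) r : S[G]) • m) =
      (MonoidAlgebra.single (h : G) r : S[G]) • f m := by
  simp only [← single_smul_eq_single_coe_smul, map_smul]

end Restriction

section Transversal

variable {T : Set G}

/-- The `S[H]`-linear map `⨁_{t ∈ T} S[H] → S[G]` sending the generator at `t` to `t`. -/
noncomputable def transversalCombination (T : Set G) : (T →₀ S[H]) →ₗ[S[H]] S[G] :=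
  Finsupp.linearCombination S[H] fun t : T ↦ MonoidAlgebra.single (t : G) (1 : S)

theorem transversalCombination_single_single (t : T) (h : H) (r : S) :
    transversalCombination T (Finsupp.single t (MonoidAlgebra.single h r)) =
      MonoidAlgebra.single (h * t : G) r := by
  simp [transversalCombination, single_smul_eq_single_coe_smul]

/-- The additive map `S[G] → ⨁_{t ∈ T} S[H]` that sends `g = h * t`, decomposed along a right
transversal `T` of `H`, to `h` in the summand at `t`. -/
noncomputable def transversalDecomposition (hT : Subgroup.IsComplement (H : Set G) T) :
    S[G] →+ (T →₀ S[H]) :=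
  (Finsupp.liftAddHom fun g ↦ (Finsupp.singleAddHom (hT.equiv g).2).comp
    (MonoidAlgebra.singleAddHom (hT.equiv g).1)).comp MonoidAlgebra.coeffAddEquiv.toAddMonoidHom

theorem transversalDecomposition_single (hT : Subgroup.IsComplement (H : Set G) T) (g : G)
    (r : S) : transversalDecomposition hT (MonoidAlgebra.single g r) =
      Finsupp.single (hT.equiv g).2 (MonoidAlgebra.single (hT.equiv g).1 r) := by
  simp [transversalDecomposition]

theorem transversalCombination_comp_transversalDecomposition
    (hT : Subgroup.IsComplement (H : Set G) T) :
    (transversalCombination T).toAddMonoidHom.comp (transversalDecomposition hT) =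
      AddMonoidHom.id S[G] := by
  refine MonoidAlgebra.addMonoidHom_ext fun g r ↦ ?_
  have := transversalCombination_single_single (hT.equiv g).2 (hT.equiv g).1 r
  rw [hT.equiv_fst_mul_equiv_snd] at this
  simpa [transversalDecomposition_single] using this

theorem transversalDecomposition_comp_transversalCombination
    (hT : Subgroup.IsComplement (H : Set G) T) :
    (transversalDecomposition hT).comp (transversalCombination T).toAddMonoidHom =
      AddMonoidHom.id (T →₀ S[H]) := by
  refine Finsupp.addHom_ext' fun t ↦ MonoidAlgebra.addMonoidHom_ext fun h r ↦ ?_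
  have : hT.equiv (h * t : G) = (h, t) := hT.equiv.apply_symm_apply (h, t)
  simp [transversalCombination_single_single, transversalDecomposition_single, this]

/-- A right transversal of `H` as a basis of `S[G]` over `S[H]`. -/
noncomputable def transversalBasis (hT : Subgroup.IsComplement (H : Set G) T) :
    Module.Basis T S[H] S[G] :=
  .ofRepr <| .symm
    { transversalCombination T with
      invFun := transversalDecomposition hT
      left_inv := DFunLike.congr_fun (transversalDecomposition_comp_transversalCombination hT)
      right_inv := DFunLike.congr_fun (transversalCombination_comp_transversalDecomposition hT) }

end Transversal

theorem free_over_subgroupAlgebra : Module.Free S[H] S[G] :=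
  have ⟨_, hT, _⟩ := H.exists_isComplement_right 1
  .of_basis (transversalBasis hT)

section RelTrace

variable {M N L : Type*} [AddCommMonoid M] [AddCommMonoid N] [AddCommMonoid L]
  [Module S[G] M] [Module S[G] N] [Module S[G] L]
  [Module S[H] M] [Module S[H] N] [Module S[H] L]

/-- The conjugate `m ↦ g • f (g⁻¹ • m)` of an `S[H]`-linear map `f` between `S[G]`-modules. It is
only additive in general. -/
noncomputable def conjAddHom (f : M →ₗ[S[H]] N) (g : G) : M →+ N where
  toFun m := (MonoidAlgebra.single g 1 : S[G]) • f ((MonoidAlgebra.single g⁻¹ 1 : S[G]) • m)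
  map_zero' := by simp only [smul_zero, map_zero]
  map_add' _ _ := by simp only [smul_add, map_add]

theorem conjAddHom_apply (f : M →ₗ[S[H]] N) (g : G) (m : M) :
    conjAddHom f g m =
      (MonoidAlgebra.single g 1 : S[G]) • f ((MonoidAlgebra.single g⁻¹ 1 : S[G]) • m) :=
  rfl

variable [IsScalarTower S[H] S[G] M] [IsScalarTower S[H] S[G] N] [IsScalarTower S[H] S[G] L]

theorem conjAddHom_mul_coe (f : M →ₗ[S[H]] N) (g : G) (h : H) :
    conjAddHom f (g * h) = conjAddHom f g := by
  ext m
  have inv_mul : (MonoidAlgebra.single (g * h : G)⁻¹ 1 : S[G]) =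
      MonoidAlgebra.single ((h⁻¹ : H) : G) 1 * MonoidAlgebra.single g⁻¹ 1 := by
    simp
  simp only [conjAddHom_apply, inv_mul, mul_smul, map_single_coe_smul]
  simp [← mul_smul]

theorem conjAddHom_mul_single_smul (f : M →ₗ[S[H]] N) (x g : G) (r : S) (m : M) :
    conjAddHom f (x * g) ((MonoidAlgebra.single x r : S[G]) • m) =
      (MonoidAlgebra.single x r : S[G]) • conjAddHom f g m := by
  have inv_mul : (MonoidAlgebra.single (x * g)⁻¹ 1 * MonoidAlgebra.single x r : S[G]) =
      MonoidAlgebra.single ((1 : H) : G) r * MonoidAlgebra.single g⁻¹ 1 := by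
    simp
  rw [conjAddHom_apply, ← mul_smul, inv_mul, mul_smul, map_single_coe_smul]
  simp [conjAddHom_apply, ← mul_smul]

theorem conjAddHom_restrictScalars (f : M →ₗ[S[G]] N) (g : G) :
    conjAddHom (f.restrictScalars S[H]) g = f.toAddMonoidHom := by
  ext m
  rw [conjAddHom_apply, LinearMap.restrictScalars_apply, map_smul, ← mul_smul]
  simp [← MonoidAlgebra.one_def]

/-- The conjugate of `f` by a representative of a coset in `G ⧸ H`. -/
noncomputable def cosetConjAddHom (f : M →ₗ[S[H]] N) (c : G ⧸ H) : M →+ N :=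
  Quotient.liftOn' c (conjAddHom f) fun a b hab ↦ by
    have := conjAddHom_mul_coe f a ⟨a⁻¹ * b, QuotientGroup.leftRel_apply.1 hab⟩
    rwa [mul_inv_cancel_left, eq_comm] at this

theorem cosetConjAddHom_mk (f : M →ₗ[S[H]] N) (g : G) :
    cosetConjAddHom f (g : G ⧸ H) = conjAddHom f g :=
  rfl

theorem cosetConjAddHom_smul_single_smul (f : M →ₗ[S[H]] N) (x : G) (c : G ⧸ H) (r : S) (m : M) :
    cosetConjAddHom f (x • c) ((MonoidAlgebra.single x r : S[G]) • m) =
      (MonoidAlgebra.single x r : S[G]) • cosetConjAddHom f c m := by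
  induction c using QuotientGroup.induction_on with
  | H g => exact conjAddHom_mul_single_smul f x g r m

variable [Fintype (G ⧸ H)]

theorem sum_cosetConjAddHom_smul (f : M →ₗ[S[H]] N) (a : S[G]) (m : M) :
    ∑ c, cosetConjAddHom f c (a • m) = a • ∑ c, cosetConjAddHom f c m := by
  induction a using MonoidAlgebra.induction_linear with
  | zero => simp
  | add a b ha hb => simp only [add_smul, map_add, Finset.sum_add_distrib, ha, hb]
  | single x r =>
    rw [Finset.smul_sum]
    exact (Fintype.sum_equiv (MulAction.toPerm x) _ _ fun c ↦
      (cosetConjAddHom_smul_single_smul f x c r m).symm).symm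

/-- The relative trace (Higman's averaging operator): the `S[G]`-linear map
`m ↦ ∑ g • f (g⁻¹ • m)`, summed over the cosets `gH`, attached to an `S[H]`-linear map `f`. -/
noncomputable def relTrace (f : M →ₗ[S[H]] N) : M →ₗ[S[G]] N where
  toFun m := ∑ c, cosetConjAddHom f c m
  map_add' _ _ := by simp only [map_add, Finset.sum_add_distrib]
  map_smul' := sum_cosetConjAddHom_smul f

theorem comp_relTrace (π : N →ₗ[S[G]] L) (f : M →ₗ[S[H]] N) :
    π ∘ₗ relTrace f = relTrace (π.restrictScalars S[H] ∘ₗ f) := by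
  ext m
  refine (map_sum π _ _).trans (Finset.sum_congr rfl fun c _ ↦ ?_)
  induction c using QuotientGroup.induction_on with
  | H g => simp [cosetConjAddHom_mk, conjAddHom_apply]

theorem relTrace_restrictScalars (f : M →ₗ[S[G]] N) :
    relTrace (f.restrictScalars S[H]) = H.index • f := by
  have conj_eq (c : G ⧸ H) : cosetConjAddHom (f.restrictScalars S[H]) c = f.toAddMonoidHom := by
    induction c using QuotientGroup.induction_on with
    | H g => exact conjAddHom_restrictScalars f g
  ext m
  simp [relTrace, conj_eq, H.index_eq_card]

end RelTrace

section Projective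

variable {M : Type*} [AddCommMonoid M] [Module S[G] M] [Module S[H] M] [IsScalarTower S[H] S[G] M]

theorem projective_restrict [Module.Projective S[G] M] : Module.Projective S[H] M :=
  have := free_over_subgroupAlgebra (S := S) (H := H)
  projective_trans (A := S[G])

theorem projective_of_projective_restrict [H.FiniteIndex] (hH : IsUnit (H.index : S))
    [Module.Projective S[H] M] : Module.Projective S[G] M := by
  let := H.fintypeQuotientOfFiniteIndex
  let π : (M →₀ S[G]) →ₗ[S[G]] M := Finsupp.linearCombination S[G] id
  have π_surjective : Function.Surjective π := Finsupp.linearCombination_id_surjective S[G] M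
  obtain ⟨s, hs⟩ := Module.projective_lifting_property (π.restrictScalars S[H]) LinearMap.id
    π_surjective
  have comp_eq : π ∘ₗ relTrace s = H.index • LinearMap.id := by
    rw [comp_relTrace, hs]
    exact relTrace_restrictScalars LinearMap.id
  have index_isUnit : IsUnit (H.index : S[G]) := by
    simpa only [map_natCast] using hH.map (MonoidAlgebra.singleOneRingHom (R := S) (M := G))
  refine projective_of_bijective_comp (relTrace s) π ?_
  rw [comp_eq]
  exact bijective_nsmul_of_isUnit index_isUnit

end Projective

end Subgroup

theorem isUnit_sylow_index (S : Type*) [CommRing S] [IsLocalRing S] {p : ℕ} [Fact p.Prime]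
    [CharP (IsLocalRing.ResidueField S) p] {G : Type*} [Group G] (P : Sylow p G)
    [(P : Subgroup G).FiniteIndex] : IsUnit ((P : Subgroup G).index : S) := by
  rw [← IsLocalRing.residue_ne_zero_iff_isUnit, map_natCast, Ne, CharP.cast_eq_zero_iff _ p]
  exact P.not_dvd_index

theorem stmt0_general (S : Type*) [Semiring S] (G : Type*) [Group G] (H : Subgroup G)
    [H.FiniteIndex] (hH : IsUnit (H.index : S))
    (M : Type*) [AddCommMonoid M] [Module (MonoidAlgebra S G) M] :
    Module.Projective (MonoidAlgebra S G) M ↔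
      (let _i : Module (MonoidAlgebra S H) M :=
        Module.compHom M (MonoidAlgebra.mapDomainRingHom S H.subtype);
      Module.Projective (MonoidAlgebra S H) M) := by
  let := Module.compHom M (MonoidAlgebra.mapDomainRingHom S H.subtype)
  have := isScalarTower_compHom_subtype (S := S) (H := H) M
  exact ⟨fun _ ↦ projective_restrict, fun _ ↦ projective_of_projective_restrict hH⟩

theorem stmt0 (S : Type*) [CommRing S] [IsLocalRing S] [IsNoetherianRing S]
    (p : ℕ) (hp : p.Prime) [CharP (IsLocalRing.ResidueField S) p]
    (G : Type*) [Group G] [Finite G] (P : Sylow p G)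
    (M : Type*) [AddCommGroup M] [Module (MonoidAlgebra S G) M]
    [Module.Finite (MonoidAlgebra S G) M] :
    Module.Projective (MonoidAlgebra S G) M ↔
      (let _i : Module (MonoidAlgebra S ↥(P : Subgroup G)) M :=
        Module.compHom M (MonoidAlgebra.mapDomainRingHom S (P : Subgroup G).subtype);
      Module.Projective (MonoidAlgebra S ↥(P : Subgroup G)) M) := by
  have : Fact p.Prime := ⟨hp⟩
  exact stmt0_general S G P (isUnit_sylow_index S P) M
end

section
/- Let (O, 𝔪) be a 2-dimensional regular local Noetherian ring whose 𝔪-adic completion Ô is a unique factorization domain. Let π ∈ O be an element generating a height-one prime ideal of O, and suppose that in Ô one has a factorization π = u·t₁⋯t_m with u a unit of Ô and t₁, …, t_m pairwise non-associate prime elements of Ô. Let S = O \ πO, a multiplicatively closed subset of O. Then every element of S lies outside each of the prime ideals t_αÔ (so that S maps to units in each localization Ô_{(t_α)}), and the induced natural ring homomorphism from the π-adic completion lim_k (S^{-1}Ô)/(π^k) of the localization S^{-1}Ô to the product ∏_{α=1}^m B_α is an isomorphism, where B_α denotes the completion of the discrete valuation ring obtained by localizing Ô at the height-one prime ideal t_αÔ.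 -/
/-!
STATEMENT 13: let `(O, 𝔪)` be a 2-dimensional regular local Noetherian ring whose completion
`Ô` is a UFD, let `π` generate a height-one prime of `O` with factorization `π = u·t₁⋯t_m`
into pairwise non-associate primes in `Ô`, and let `S = O \ πO`.  Then `S` maps outside each
prime `t_αÔ`, and the natural map from the `π`-adic completion of `S⁻¹Ô` to `∏ B_α` is an
isomorphism, where `B_α` is the completion of the discrete valuation ring `Ô_{(t_α)}`.
-/

/-- A regular local ring: a Noetherian local ring whose maximal ideal can be generated by
`d` elements, where `d` is the Krull dimension. -/
def IsRegularLocal (R : Type*) [CommRing R] [IsLocalRing R] : Prop :=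
  IsNoetherianRing R ∧
    ∃ (n : ℕ) (f : Fin n → R), Ideal.span (Set.range f) = IsLocalRing.maximalIdeal R ∧
      (n : WithBot (WithTop ℕ)) = ringKrullDim R

/-!
Write `A = Ô` and `L = S⁻¹A`. By going-down for the flat map `O → A`, the primes `t_αA`, which are
minimal over `πA`, contract to `πO`. Any prime of `A` strictly above `t_αA` has height at least
`2 ≥ dim A`, so it is the maximal ideal, which meets `S`; hence the `t_αL` are distinct maximal
ideals. The Chinese remainder theorem then gives `L / πᵏ ≃ ∏ L / (t_α)ᵏ ≃ ∏ A_(t_α) / (t_α)ᵏ`,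
compatibly in `k`, and it remains to pass to the limit.
-/

open IsLocalRing

section AdicCompletionMap

variable {R S : Type*} [CommRing R] [CommRing S] (I : Ideal R)

theorem factorPow_evalₐ {m n : ℕ} (hmn : m ≤ n) (x : AdicCompletion I R) :
    Ideal.Quotient.factorPow I hmn (AdicCompletion.evalₐ I n x) = AdicCompletion.evalₐ I m x := by
  obtain ⟨a, rfl⟩ := AdicCompletion.mk_surjective I R x
  rw [AdicCompletion.evalₐ_mk, AdicCompletion.evalₐ_mk]
  exact (AdicCompletion.Ideal.mk_eq_mk I hmn a)

variable {I} {J : Ideal S} (g : R →+* S) (h : I ≤ J.comap g)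

/-- The map `R ⧸ I ^ n → S ⧸ J ^ n` induced by a ring homomorphism `g : R → S` with `g I ⊆ J`. -/
def quotientPowMap (n : ℕ) : R ⧸ I ^ n →+* S ⧸ J ^ n :=
  Ideal.quotientMap (J ^ n) g ((Ideal.pow_right_mono h n).trans (Ideal.le_comap_pow g n))

@[simp]
theorem quotientPowMap_mk (n : ℕ) (r : R) :
    quotientPowMap g h n (Ideal.Quotient.mk _ r) = Ideal.Quotient.mk _ (g r) :=
  rfl

theorem factorPow_quotientPowMap {m n : ℕ} (hmn : m ≤ n) (x : R ⧸ I ^ n) :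
    Ideal.Quotient.factorPow J hmn (quotientPowMap g h n x) =
      quotientPowMap g h m (Ideal.Quotient.factorPow I hmn x) := by
  obtain ⟨r, rfl⟩ := Ideal.Quotient.mk_surjective x
  rfl

theorem factorPow_comp_quotientPowMap_comp_evalₐ {m n : ℕ} (hmn : m ≤ n) :
    (Ideal.Quotient.factorPow J hmn).comp
        ((quotientPowMap g h n).comp (AdicCompletion.evalₐ I n : AdicCompletion I R →+* _)) =
      (quotientPowMap g h m).comp (AdicCompletion.evalₐ I m : AdicCompletion I R →+* _) :=
  RingHom.ext fun x => by simp [factorPow_quotientPowMap, factorPow_evalₐ]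

/-- The ring homomorphism between the adic completions of `R` and `S` induced by a ring
homomorphism `g : R → S` with `g I ⊆ J`. -/
noncomputable def adicCompletionMap : AdicCompletion I R →+* AdicCompletion J S :=
  AdicCompletion.liftRingHom J
    (fun n => (quotientPowMap g h n).comp (AdicCompletion.evalₐ I n : _ →+* R ⧸ I ^ n))
    (factorPow_comp_quotientPowMap_comp_evalₐ g h)

@[simp]
theorem evalₐ_adicCompletionMap (n : ℕ) (x : AdicCompletion I R) :
    AdicCompletion.evalₐ J n (adicCompletionMap g h x) =
      quotientPowMap g h n (AdicCompletion.evalₐ I n x) :=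
  AdicCompletion.evalₐ_liftRingHom _ _ (factorPow_comp_quotientPowMap_comp_evalₐ g h) n x

@[simp]
theorem adicCompletionMap_algebraMap (r : R) :
    adicCompletionMap g h (algebraMap R _ r) = algebraMap S _ (g r) :=
  AdicCompletion.ext_evalₐ fun n => by
    simp only [evalₐ_adicCompletionMap, AlgHom.commutes, Ideal.Quotient.algebraMap_eq,
      quotientPowMap_mk, AlgHom.commutes]

end AdicCompletionMap

section Noetherian

variable {R S : Type*} [CommRing R] [CommRing S]

theorem adicCompletionMap_surjective {J : Ideal R} (hJ : J.FG) {g : R →+* S}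
    (hg : Function.Surjective g) :
    Function.Surjective (adicCompletionMap g (J.le_comap_map (f := g))) := by
  set G := adicCompletionMap g (J.le_comap_map (f := g))
  have hmap : (J.map (algebraMap R (AdicCompletion J R))).map G =
      (J.map g).map (algebraMap S (AdicCompletion (J.map g) S)) := by
    rw [Ideal.map_map, Ideal.map_map]
    exact congrArg (J.map ·) (RingHom.ext fun r => adicCompletionMap_algebraMap g _ r)
  have := AdicCompletion.isAdicComplete_self J hJ
  have : IsAdicComplete ((J.map (algebraMap R _)).map G) (AdicCompletion (J.map g) S) := by
    rw [hmap]
    exact AdicCompletion.isAdicComplete_self (J.map g) (hJ.map g)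
  refine surjective_of_mk_map_comp_surjective G (I := J.map (algebraMap R _)) fun y => ?_
  obtain ⟨y, rfl⟩ := Ideal.Quotient.mk_surjective y
  obtain ⟨s, hs⟩ := Ideal.Quotient.mk_surjective (AdicCompletion.evalOneₐ (J.map g) y)
  obtain ⟨r, rfl⟩ := hg s
  refine ⟨algebraMap R _ r, ?_⟩
  rw [RingHom.comp_apply, adicCompletionMap_algebraMap, Ideal.Quotient.eq, hmap,
    ← AdicCompletion.ker_evalOneₐ_eq_map _ (hJ.map g), RingHom.mem_ker, map_sub, sub_eq_zero]
  exact ((AdicCompletion.evalOneₐ _).commutes _).trans hs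

-- The completion is a quotient of the ring of power series in a set of generators of `I`.
theorem isNoetherianRing_adicCompletion [IsNoetherianRing R] (I : Ideal R) :
    IsNoetherianRing (AdicCompletion I R) := by
  obtain ⟨n, f, rfl⟩ := Submodule.fg_iff_exists_fin_generating_family.mp I.fg_of_isNoetherianRing
  let g : MvPolynomial (Fin n) R →+* R := MvPolynomial.eval f
  have hg : Function.Surjective g := fun r => ⟨MvPolynomial.C r, MvPolynomial.eval_C r⟩
  have hmap : (MvPolynomial.idealOfVars (Fin n) R).map g = Ideal.span (Set.range f) := by
    rw [MvPolynomial.idealOfVars, Ideal.map_span, ← Set.range_comp]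
    simp only [g, Function.comp_def, MvPolynomial.eval_X]
  have : IsNoetherianRing (AdicCompletion (MvPolynomial.idealOfVars (Fin n) R) _) :=
    isNoetherianRing_of_ringEquiv (MvPowerSeries (Fin n) R)
      (MvPowerSeries.toAdicCompletionAlgEquiv (Fin n) R).toRingEquiv
  have := isNoetherianRing_of_surjective _ _ _
    (adicCompletionMap_surjective (MvPolynomial.idealOfVars_fg (Fin n) R) hg)
  rwa [hmap] at this

end Noetherian

section Product

variable {L ι : Type*} [CommRing L] {R : ι → Type*} [∀ i, CommRing (R i)]
  {I : Ideal L} {M : ∀ i, Ideal (R i)} (g : ∀ i, L →+* R i) (h : ∀ i, I ≤ (M i).comap (g i))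

theorem pi_adicCompletionMap_injective
    (hinj : ∀ n, Function.Injective (RingHom.pi fun i => quotientPowMap (g i) (h i) n)) :
    Function.Injective (RingHom.pi fun i => adicCompletionMap (g i) (h i)) := by
  refine fun x y hxy => AdicCompletion.ext_evalₐ fun n => hinj n (funext fun i => ?_)
  simpa using congrArg (fun z => AdicCompletion.evalₐ (M i) n (z i)) hxy

theorem pi_adicCompletionMap_surjective
    (hbij : ∀ n, Function.Bijective (RingHom.pi fun i => quotientPowMap (g i) (h i) n)) :
    Function.Surjective (RingHom.pi fun i => adicCompletionMap (g i) (h i)) := by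
  intro y
  let e n := RingEquiv.ofBijective _ (hbij n)
  let ev n : (∀ i, AdicCompletion (M i) (R i)) →+* ∀ i, R i ⧸ M i ^ n :=
    RingHom.pi fun i =>
      (AdicCompletion.evalₐ (M i) n : AdicCompletion (M i) (R i) →+* R i ⧸ M i ^ n).comp
        (Pi.evalRingHom _ i)
  have he n x i : quotientPowMap (g i) (h i) n ((e n).symm x) = x i :=
    congrFun ((e n).apply_symm_apply x) i
  have compat {m n : ℕ} (hmn : m ≤ n) :
      (Ideal.Quotient.factorPow I hmn).comp ((e n).symm.toRingHom.comp (ev n)) =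
        (e m).symm.toRingHom.comp (ev m) := by
    refine RingHom.ext fun y => (hbij m).1 (funext fun i => ?_)
    calc quotientPowMap (g i) (h i) m (Ideal.Quotient.factorPow I hmn ((e n).symm (ev n y)))
      _ = Ideal.Quotient.factorPow (M i) hmn (ev n y i) := by
        rw [← factorPow_quotientPowMap, he]
      _ = ev m y i := factorPow_evalₐ (M i) hmn (y i)
      _ = quotientPowMap (g i) (h i) m ((e m).symm (ev m y)) := (he m _ i).symm
  refine ⟨AdicCompletion.liftRingHom I (fun n => (e n).symm.toRingHom.comp (ev n)) compat y,
    funext fun i => AdicCompletion.ext_evalₐ fun n => ?_⟩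
  refine (evalₐ_adicCompletionMap (g i) (h i) n _).trans ?_
  rw [AdicCompletion.evalₐ_liftRingHom I _ compat]
  exact he n (ev n y) i

end Product

section ChineseRemainder

variable {L ι : Type*} [CommRing L] [Fintype ι]

theorem prod_le_comap_maximalIdeal (P : ι → Ideal L) (i : ι) [(P i).IsPrime] (R : Type*)
    [CommRing R] [IsLocalRing R] [Algebra L R] [IsLocalization.AtPrime R (P i)] :
    ∏ j, P j ≤ (maximalIdeal R).comap (algebraMap L R) :=
  (Ideal.prod_le_inf.trans (Finset.inf_le (Finset.mem_univ i))).trans_eq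
    (IsLocalization.AtPrime.under_maximalIdeal R (P i)).symm

variable {P : ι → Ideal L} [∀ i, (P i).IsMaximal] (R : ι → Type*) [∀ i, CommRing (R i)]
  [∀ i, IsLocalRing (R i)] [∀ i, Algebra L (R i)] [∀ i, IsLocalization.AtPrime (R i) (P i)]

theorem pi_quotientPowMap_bijective (hP : Function.Injective P) (n : ℕ) :
    Function.Bijective (RingHom.pi fun i =>
      quotientPowMap (algebraMap L (R i)) (prod_le_comap_maximalIdeal P i (R i)) n) := by
  have hcop : Pairwise (Function.onFun IsCoprime fun i => P i ^ n) := fun i j hij =>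
    (Ideal.isCoprime_of_isMaximal (hP.ne hij)).pow
  constructor
  · rw [injective_iff_map_eq_zero]
    intro x hx
    obtain ⟨x, rfl⟩ := Ideal.Quotient.mk_surjective x
    rw [Ideal.Quotient.eq_zero_iff_mem, ← Finset.prod_pow,
      Ideal.prod_eq_iInf_of_pairwise_isCoprime fun i _ j _ hij => hcop hij]
    simp only [Finset.mem_univ, iInf_pos, Ideal.mem_iInf]
    intro i
    rw [← IsLocalization.AtPrime.under_maximalIdeal_pow (P i) (R i) n, Ideal.mem_comap,
      ← Ideal.Quotient.eq_zero_iff_mem]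
    exact congrFun hx i
  · intro y
    let e i := IsLocalization.AtPrime.equivQuotMaximalIdealPow (P i) (R i) n
    obtain ⟨x, hx⟩ := Ideal.pi_quotient_surjective hcop fun i => (e i).symm (y i)
    exact ⟨Ideal.Quotient.mk _ x, funext fun i => (e i).symm_apply_eq.mp (hx i).symm |>.symm⟩

/-- The Chinese remainder theorem in the limit: the completion of a ring along a product of
distinct maximal ideals is the product of the completed localizations at these ideals. -/
noncomputable def adicCompletionProdEquiv (hP : Function.Injective P) :
    AdicCompletion (∏ i, P i) L ≃+* ∀ i, AdicCompletion (maximalIdeal (R i)) (R i) :=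
  RingEquiv.ofBijective _
    ⟨pi_adicCompletionMap_injective _ (fun i => prod_le_comap_maximalIdeal P i (R i))
      fun n => (pi_quotientPowMap_bijective R hP n).1,
    pi_adicCompletionMap_surjective _ _ (pi_quotientPowMap_bijective R hP)⟩

theorem adicCompletionProdEquiv_algebraMap (hP : Function.Injective P) (x : L) :
    adicCompletionProdEquiv R hP (algebraMap L _ x) =
      fun i => algebraMap (R i) _ (algebraMap L (R i) x) :=
  funext fun _ => adicCompletionMap_algebraMap _ _ x

end ChineseRemainder

section Localization

variable {A : Type*} [CommRing A] (T : Submonoid A) (L : Type*) [CommRing L] [Algebra A L]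
  [IsLocalization T L]

theorem isMaximal_map_of_maximal_disjoint {P : Ideal A}
    (hP : Maximal (fun Q : Ideal A => Q.IsPrime ∧ Disjoint (T : Set A) Q) P) :
    (P.map (algebraMap A L)).IsMaximal := by
  have hprime := IsLocalization.isPrime_of_isPrime_disjoint T L P hP.prop.1 hP.prop.2
  obtain ⟨M, hM, hPM⟩ := Ideal.exists_le_maximal _ hprime.ne_top
  obtain ⟨hMprime, hMT⟩ := (IsLocalization.isPrime_iff_isPrime_disjoint T L M).mp hM.isPrime
  have hle : M.comap (algebraMap A L) ≤ P :=
    hP.le_of_ge ⟨hMprime, hMT⟩ (Ideal.map_le_iff_le_comap.mp hPM)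
  suffices M ≤ P.map (algebraMap A L) from le_antisymm hPM this ▸ hM
  exact (IsLocalization.map_under T L M).ge.trans (Ideal.map_mono hle)

theorem atPrime_map_of_disjoint (P : Ideal A) [hP : P.IsPrime]
    [(P.map (algebraMap A L)).IsPrime] (B : Type*) [CommRing B] [Algebra A B] [Algebra L B]
    [IsScalarTower A L B] [IsLocalization.AtPrime B P] (hPT : Disjoint (T : Set A) P) :
    IsLocalization.AtPrime B (P.map (algebraMap A L)) := by
  have hunder := IsLocalization.under_map_of_isPrime_disjoint T L hP hPT
  have := IsLocalization.isLocalization_of_submonoid_le L B T P.primeCompl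
    (Set.subset_compl_iff_disjoint_right.mpr hPT)
  refine IsLocalization.isLocalization_of_is_exists_mul_mem B
    (P.primeCompl.map (algebraMap A L)) _ ?_ ?_
  · rintro _ ⟨a, ha, rfl⟩ haP
    exact ha (hunder.le haP)
  · rintro ⟨x, hx⟩
    obtain ⟨⟨a, s⟩, hax⟩ := IsLocalization.surj T x
    refine ⟨algebraMap A L s, a, fun haP => hx ?_, by rw [mul_comm, hax]⟩
    exact (Ideal.mul_unit_mem_iff_mem _ (IsLocalization.map_units L s)).mp
      (hax ▸ Ideal.mem_map_of_mem _ haP)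

theorem exists_adicCompletion_map_prod_ringEquiv {ι : Type*} [Fintype ι] {P : ι → Ideal A}
    [∀ i, (P i).IsPrime] (hPinj : Function.Injective P)
    (hP : ∀ i, Maximal (fun Q : Ideal A => Q.IsPrime ∧ Disjoint (T : Set A) Q) (P i))
    (R : ι → Type*) [∀ i, CommRing (R i)] [∀ i, IsLocalRing (R i)] [∀ i, Algebra A (R i)]
    [∀ i, IsLocalization.AtPrime (R i) (P i)] [∀ i, Algebra L (R i)]
    [∀ i, IsScalarTower A L (R i)] :
    ∃ Φ : AdicCompletion ((∏ i, P i).map (algebraMap A L)) L ≃+*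
        ∀ i, AdicCompletion (maximalIdeal (R i)) (R i),
      ∀ x : L, Φ (algebraMap L _ x) = fun i => algebraMap (R i) _ (algebraMap L (R i) x) := by
  have hmax i : ((P i).map (algebraMap A L)).IsMaximal :=
    isMaximal_map_of_maximal_disjoint T L (hP i)
  have hloc i : IsLocalization.AtPrime (R i) ((P i).map (algebraMap A L)) :=
    atPrime_map_of_disjoint T L (P i) (R i) (hP i).prop.2
  have hinj : Function.Injective fun i => (P i).map (algebraMap A L) := fun i j hij => hPinj <| by
    simpa only [IsLocalization.under_map_of_isPrime_disjoint T L (hP _).prop.1 (hP _).prop.2] using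
      congrArg (Ideal.under A) hij
  rw [show (∏ i, P i).map (algebraMap A L) = ∏ i, (P i).map (algebraMap A L) from
    map_prod (Ideal.mapHom (algebraMap A L)) P Finset.univ]
  exact ⟨adicCompletionProdEquiv R hinj, adicCompletionProdEquiv_algebraMap R hinj⟩

theorem exists_adicCompletion_localization_ringEquiv {ι : Type*} [Fintype ι] {P : ι → Ideal A}
    [∀ i, (P i).IsPrime] (hPinj : Function.Injective P)
    (hP : ∀ i, Maximal (fun Q : Ideal A => Q.IsPrime ∧ Disjoint (T : Set A) Q) (P i)) :
    ∃ Φ : AdicCompletion ((∏ i, P i).map (algebraMap A (Localization T))) (Localization T) ≃+*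
        ∀ i, AdicCompletion (maximalIdeal (Localization.AtPrime (P i)))
          (Localization.AtPrime (P i)),
      ∀ x : A, Φ (algebraMap (Localization T) _ (algebraMap A _ x)) =
        fun i => algebraMap (Localization.AtPrime (P i)) _ (algebraMap A _ x) := by
  have hle i : T ≤ (P i).primeCompl := Set.subset_compl_iff_disjoint_right.mpr (hP i).prop.2
  let _ i : Algebra (Localization T) (Localization.AtPrime (P i)) :=
    IsLocalization.localizationAlgebraOfSubmonoidLe _ _ T (P i).primeCompl (hle i)
  have htower i : IsScalarTower A (Localization T) (Localization.AtPrime (P i)) :=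
    IsLocalization.localization_isScalarTower_of_submonoid_le _ _ T (P i).primeCompl (hle i)
  obtain ⟨Φ, hΦ⟩ := exists_adicCompletion_map_prod_ringEquiv T (Localization T) hPinj hP
    fun i => Localization.AtPrime (P i)
  exact ⟨Φ, fun x => (hΦ _).trans (funext fun i =>
    congrArg (algebraMap _ _) (IsScalarTower.algebraMap_apply A (Localization T) _ x).symm)⟩

end Localization

section GoingDown

variable {ι A : Type*} [CommRing A]

theorem mem_minimalPrimes_prod [Fintype ι] {P : ι → Ideal A} [∀ i, (P i).IsPrime]
    (hP : ∀ i j, P i ≤ P j → i = j) (i : ι) : P i ∈ (∏ j, P j).minimalPrimes := by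
  refine ⟨⟨inferInstance, Ideal.prod_le_inf.trans (Finset.inf_le (Finset.mem_univ i))⟩, ?_⟩
  rintro Q ⟨hQ, hprod⟩ hQi
  obtain ⟨j, -, hj⟩ := hQ.prod_le.mp hprod
  exact hP j i (hj.trans hQi) ▸ hj

variable {O : Type*} [CommRing O] [Algebra O A] (𝔭 : Ideal O) [𝔭.IsPrime]

theorem liesOver_of_mem_minimalPrimes_map [Algebra.HasGoingDown O A] {P : Ideal A}
    (hP : P ∈ (𝔭.map (algebraMap O A)).minimalPrimes) : P.LiesOver 𝔭 := by
  have := hP.1.1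
  have hle : 𝔭 ≤ P.under O := Ideal.map_le_iff_le_comap.mp hP.1.2
  obtain ⟨Q, hQP, hQ, hQover⟩ := Ideal.exists_ideal_le_liesOver_of_le P hle
  have hmap : 𝔭.map (algebraMap O A) ≤ Q := Ideal.map_le_iff_le_comap.mpr hQover.over.le
  rwa [← hQP.antisymm (hP.2 ⟨hQ, hmap⟩ hQP)]

theorem height_le_height_of_liesOver [Algebra.HasGoingDown O A] [𝔭.FiniteHeight] (P : Ideal A)
    [P.IsPrime] [P.LiesOver 𝔭] : 𝔭.height ≤ P.height := by
  obtain ⟨l, hlast, hlength⟩ := 𝔭.exists_ltSeries_length_eq_height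
  have : P.LiesOver l.last.asIdeal := by rwa [hlast]
  obtain ⟨l', hlength', hlast', -⟩ := Ideal.exists_ltSeries_of_hasGoingDown l P
  rw [← hlength, ← hlength', (⟨P, ‹_›⟩ : PrimeSpectrum A).height_eq_orderHeight]
  exact Order.length_le_height hlast'.le

variable [IsLocalRing O] [IsLocalRing A] [IsLocalHom (algebraMap O A)]

theorem eq_of_le_of_liesOver [Algebra.HasGoingDown O A] [𝔭.FiniteHeight]
    (h𝔭 : 𝔭 ≠ maximalIdeal O) (hdim : ringKrullDim A ≤ 𝔭.height + 1) {P Q : Ideal A} [P.IsPrime]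
    [Q.IsPrime] [P.LiesOver 𝔭] [Q.LiesOver 𝔭] (hPQ : P ≤ Q) : P = Q := by
  by_contra hne
  have hQ : Q ≠ maximalIdeal A := by
    rintro rfl
    exact h𝔭 ((Ideal.over_def _ 𝔭).trans (maximalIdeal_comap (algebraMap O A)))
  have hne_top := 𝔭.height_ne_top Ideal.IsPrime.ne_top'
  have hlt : 𝔭.height + 1 < 𝔭.height + 1 + 1 :=
    (ENat.lt_add_one_iff (by simpa using hne_top)).mpr le_rfl
  refine hlt.not_ge ?_
  calc 𝔭.height + 1 + 1
    _ ≤ P.height + 1 + 1 := by gcongr; exact height_le_height_of_liesOver 𝔭 P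
    _ ≤ Q.height + 1 := by
      gcongr; exact Ideal.height_add_one_le_of_lt_of_isPrime (hPQ.lt_of_ne hne)
    _ ≤ (maximalIdeal A).height :=
      Ideal.height_add_one_le_of_lt_of_isPrime
        ((le_maximalIdeal Ideal.IsPrime.ne_top').lt_of_ne hQ)
    _ ≤ 𝔭.height + 1 := by
      rw [← maximalIdeal_height_eq_ringKrullDim] at hdim
      exact_mod_cast hdim

theorem maximal_disjoint_of_liesOver [Algebra.HasGoingDown O A] [𝔭.FiniteHeight]
    (h𝔭 : 𝔭 ≠ maximalIdeal O) (hdim : ringKrullDim A ≤ 𝔭.height + 1) (P : Ideal A) [P.IsPrime]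
    [P.LiesOver 𝔭] :
    Maximal (fun Q : Ideal A => Q.IsPrime ∧
      Disjoint (𝔭.primeCompl.map (algebraMap O A) : Set A) Q) P := by
  refine ⟨⟨inferInstance, ?_⟩, ?_⟩
  · rw [Set.disjoint_left]
    rintro _ ⟨s, hs, rfl⟩ hsP
    exact hs ((Ideal.mem_of_liesOver P 𝔭 s).mpr hsP)
  · rintro Q ⟨hQ, hQdisj⟩ hPQ
    have : Q.LiesOver 𝔭 := by
      refine ⟨le_antisymm ((P.over_def 𝔭).le.trans (Ideal.comap_mono hPQ)) fun x hx => ?_⟩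
      by_contra hx𝔭
      exact Set.disjoint_left.mp hQdisj ⟨x, hx𝔭, rfl⟩ hx
    exact (eq_of_le_of_liesOver 𝔭 h𝔭 hdim hPQ).ge

end GoingDown

theorem ringKrullDim_le_of_map_maximalIdeal {O A : Type*} [CommRing O] [IsLocalRing O]
    [IsNoetherianRing O] [CommRing A] [IsLocalRing A] [IsNoetherianRing A] [Algebra O A]
    (h : (maximalIdeal O).map (algebraMap O A) = maximalIdeal A) :
    ringKrullDim A ≤ ringKrullDim O := by
  have hle := Ideal.map_le_iff_le_comap.mp h.le
  have : (maximalIdeal A).LiesOver (maximalIdeal O) :=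
    ⟨(maximalIdeal.isMaximal O).eq_of_le Ideal.IsPrime.ne_top' hle⟩
  rw [← maximalIdeal_height_eq_ringKrullDim, ← maximalIdeal_height_eq_ringKrullDim]
  refine WithBot.coe_le_coe.mpr ?_
  refine (Ideal.height_le_height_add_of_liesOver (maximalIdeal O) (maximalIdeal A)).trans_eq ?_
  rw [h, Ideal.map_quotient_self, Ideal.height_bot, add_zero]

theorem ne_maximalIdeal_of_ringKrullDim_eq_height_add_one {O : Type*} [CommRing O] [IsLocalRing O]
    (𝔭 : Ideal O) [𝔭.IsPrime] [𝔭.FiniteHeight] (h : ringKrullDim O = 𝔭.height + 1) :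
    𝔭 ≠ maximalIdeal O := by
  rintro rfl
  rw [← maximalIdeal_height_eq_ringKrullDim] at h
  have hne_top := (maximalIdeal O).height_ne_top Ideal.IsPrime.ne_top'
  exact ((ENat.lt_add_one_iff hne_top).mpr le_rfl).ne (by exact_mod_cast h)

theorem irreducible_of_prime_of_isLocalRing {A : Type*} [CommRing A] [IsLocalRing A] {p : A}
    (hp : Prime p) : Irreducible p := by
  have key {a b : A} (hab : p = a * b) (hpa : p ∣ a) : IsUnit b := by
    obtain ⟨c, rfl⟩ := hpa
    refine (isUnit_or_isUnit_one_sub_self (c * b)).elim isUnit_of_mul_isUnit_right fun h => ?_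
    exact absurd (h.mul_left_eq_zero.mp (by linear_combination hab)) hp.ne_zero
  refine ⟨hp.not_isUnit, fun a b hab => ?_⟩
  rcases hp.dvd_or_dvd hab.dvd with hpa | hpb
  · exact .inr (key hab hpa)
  · exact .inl (key (hab.trans (mul_comm a b)) hpb)

theorem eq_of_span_singleton_le {A ι : Type*} [CommRing A] [IsLocalRing A] {t : ι → A}
    (ht : ∀ i, Prime (t i)) (hna : ∀ i j, i ≠ j → ¬ Associated (t i) (t j)) (i j : ι)
    (h : Ideal.span {t i} ≤ Ideal.span {t j}) : i = j := by
  by_contra hij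
  refine hna j i (Ne.symm hij) (Irreducible.associated_of_dvd ?_ ?_ ?_)
  · exact irreducible_of_prime_of_isLocalRing (ht j)
  · exact irreducible_of_prime_of_isLocalRing (ht i)
  · exact Ideal.span_singleton_le_span_singleton.mp h

theorem ringKrullDim_adicCompletion_maximalIdeal_le (O : Type*) [CommRing O] [IsLocalRing O]
    [IsNoetherianRing O] : ringKrullDim (AdicCompletion (maximalIdeal O) O) ≤ ringKrullDim O :=
  have := isNoetherianRing_adicCompletion (maximalIdeal O)
  ringKrullDim_le_of_map_maximalIdeal AdicCompletion.maximalIdeal_eq_map.symm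

theorem stmt13_general {O ι : Type*} [CommRing O] [IsLocalRing O] [IsNoetherianRing O] [Fintype ι]
    (π : O) [(Ideal.span {π}).IsPrime] (hdim : ringKrullDim O = (Ideal.span {π}).height + 1)
    (u : (AdicCompletion (maximalIdeal O) O)ˣ) (t : ι → AdicCompletion (maximalIdeal O) O)
    [∀ i, (Ideal.span {t i}).IsPrime] (ht : ∀ i, t i ≠ 0)
    (hna : ∀ i j, i ≠ j → ¬ Associated (t i) (t j))
    (hfact : algebraMap O (AdicCompletion (maximalIdeal O) O) π = u * ∏ i, t i) :
    let S := (Ideal.span {π}).primeCompl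
    let L := Localization (S.map (algebraMap O (AdicCompletion (maximalIdeal O) O)))
    (∀ i, ∀ s ∈ S, algebraMap O (AdicCompletion (maximalIdeal O) O) s ∉ Ideal.span {t i}) ∧
      ∃ Φ : AdicCompletion (Ideal.span {algebraMap (AdicCompletion (maximalIdeal O) O) L
            (algebraMap O (AdicCompletion (maximalIdeal O) O) π)}) L ≃+*
          ∀ i, AdicCompletion (maximalIdeal (Localization.AtPrime (Ideal.span {t i})))
            (Localization.AtPrime (Ideal.span {t i})),
        ∀ x : AdicCompletion (maximalIdeal O) O, Φ (algebraMap L _ (algebraMap _ L x)) =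
          fun i => algebraMap (Localization.AtPrime (Ideal.span {t i})) _ (algebraMap _ _ x) := by
  intro S L
  have hprime i : Prime (t i) := (Ideal.span_singleton_prime (ht i)).mp inferInstance
  have hincomp := eq_of_span_singleton_le hprime hna
  have hmap : (Ideal.span {π}).map (algebraMap O (AdicCompletion (maximalIdeal O) O)) =
      ∏ i, Ideal.span {t i} := by
    rw [Ideal.map_span, Set.image_singleton, hfact, Ideal.span_singleton_mul_left_unit u.isUnit,
      Ideal.prod_span_singleton]
  have hspan : ((Ideal.span {π}).map (algebraMap O (AdicCompletion (maximalIdeal O) O))).map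
      (algebraMap (AdicCompletion (maximalIdeal O) O) L) =
      Ideal.span {algebraMap (AdicCompletion (maximalIdeal O) O) L (algebraMap O _ π)} := by
    rw [Ideal.map_span, Set.image_singleton, Ideal.map_span, Set.image_singleton]
  have hover i : (Ideal.span {t i}).LiesOver (Ideal.span {π}) :=
    liesOver_of_mem_minimalPrimes_map _ (hmap ▸ mem_minimalPrimes_prod hincomp i)
  have hmax i := maximal_disjoint_of_liesOver (Ideal.span {π})
    (ne_maximalIdeal_of_ringKrullDim_eq_height_add_one _ hdim)
    ((ringKrullDim_adicCompletion_maximalIdeal_le O).trans_eq hdim) (Ideal.span {t i})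
  refine ⟨fun i s hs => Set.disjoint_left.mp (hmax i).prop.2 ⟨s, hs, rfl⟩, ?_⟩
  rw [← hspan, hmap]
  exact exists_adicCompletion_localization_ringEquiv _ (fun i j hij => hincomp i j hij.le) hmax

theorem stmt13 (O : Type*) [CommRing O] [IsLocalRing O]
    (hreg : IsRegularLocal O) (hdim : ringKrullDim O = 2)
    -- the completion `Ô` is a unique factorization domain
    [IsDomain (AdicCompletion (IsLocalRing.maximalIdeal O) O)]
    [UniqueFactorizationMonoid (AdicCompletion (IsLocalRing.maximalIdeal O) O)]
    -- `π` generates a height-one prime ideal of `O`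
    (π : O) (hπprime : (Ideal.span {π}).IsPrime)
    (hπht : Order.height (⟨Ideal.span {π}, hπprime⟩ : PrimeSpectrum O) = 1)
    -- the factorization `π = u·t₁⋯t_m` into pairwise non-associate primes in `Ô`
    (m : ℕ) (u : (AdicCompletion (IsLocalRing.maximalIdeal O) O)ˣ)
    (t : Fin m → AdicCompletion (IsLocalRing.maximalIdeal O) O)
    (ht : ∀ α, Prime (t α))
    (htnonassoc : ∀ α α', α ≠ α' → ¬ Associated (t α) (t α'))
    (hfact : algebraMap O (AdicCompletion (IsLocalRing.maximalIdeal O) O) π =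
      (u : AdicCompletion (IsLocalRing.maximalIdeal O) O) * ∏ α, t α) :
    letI := hπprime
    letI hall : ∀ α, (Ideal.span {t α}).IsPrime :=
      fun α => (Ideal.span_singleton_prime (ht α).ne_zero).mpr (ht α)
    -- `S = O \ πO`
    let S : Submonoid O := (Ideal.span {π}).primeCompl
    -- `S⁻¹Ô`, the localization of `Ô` at (the image of) `S`
    let L := Localization (S.map (algebraMap O (AdicCompletion (IsLocalRing.maximalIdeal O) O)))
    -- the `π`-adic completion of `S⁻¹Ô`
    let C := AdicCompletion
      (Ideal.span {algebraMap (AdicCompletion (IsLocalRing.maximalIdeal O) O) L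
        (algebraMap O (AdicCompletion (IsLocalRing.maximalIdeal O) O) π)}) L
    -- claim 1: every element of `S` lies outside each prime `t_αÔ`
    ((∀ (α : Fin m), ∀ s ∈ S,
        algebraMap O (AdicCompletion (IsLocalRing.maximalIdeal O) O) s ∉ Ideal.span {t α}) ∧
    -- claim 2: the natural map `C → ∏ B_α` is an isomorphism, i.e. there is a ring
    -- isomorphism compatible with the canonical maps from `Ô`
      ∃ Φ : C ≃+* ∀ α : Fin m,
          AdicCompletion
            (IsLocalRing.maximalIdeal (Localization.AtPrime (Ideal.span {t α})))
            (Localization.AtPrime (Ideal.span {t α})),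
        ∀ x : AdicCompletion (IsLocalRing.maximalIdeal O) O,
          Φ (algebraMap L C (algebraMap (AdicCompletion (IsLocalRing.maximalIdeal O) O) L x)) =
            fun α => algebraMap (Localization.AtPrime (Ideal.span {t α}))
              (AdicCompletion
                (IsLocalRing.maximalIdeal (Localization.AtPrime (Ideal.span {t α})))
                (Localization.AtPrime (Ideal.span {t α})))
              (algebraMap (AdicCompletion (IsLocalRing.maximalIdeal O) O)
                (Localization.AtPrime (Ideal.span {t α})) x)) := by
  have := hreg.1
  have hprime α := (Ideal.span_singleton_prime (ht α).ne_zero).mpr (ht α)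
  rw [← PrimeSpectrum.height_eq_orderHeight] at hπht
  exact stmt13_general π (by rw [hdim, hπht]; rfl) u t (fun α => (ht α).ne_zero) htnonassoc hfact
end

section
/- Let (O, 𝔪) be a 2-dimensional regular local Noetherian domain which is a flat ℤ-algebra with finite residue field of characteristic p, and let Ô denote its 𝔪-adic completion. Suppose that in O one has a factorization p = v·∏_{i=1}^{j} πᵢ^{aᵢ} with v a unit of O, j ≥ 1, and π₁, …, π_j pairwise non-associate irreducible elements of O, and that π₁ generates a prime ideal of O. Suppose further that in Ô one has π₁ = u·t₁⋯t_m with u a unit of Ô and t₁, …, t_m pairwise non-associate prime elements of Ô. Fix α ∈ {1,…,m} and let B_α denote the completion of the discrete valuation ring obtained by localizing Ô at the height-one prime ideal t_αÔ. Then t_α·B_α = p·B_α if and only if a₁ = 1, equivalently if and only if p generates the maximal ideal of the localization of O at the prime ideal π₁O. -/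
/-!
Let `s = π₁ / t_α`, which `t_α` does not divide. If `x ∈ O` and `t_α ∣ x` in `Ô`, then `π₁ ∣ s x`
in `Ô`, so by flatness of `Ô` over `O` the element `s` is an `Ô`-combination of elements `b ∈ O`
with `π₁ ∣ b x` in `O`. Some such `b` is not divisible by `t_α`, hence not by `π₁`, and therefore
`π₁ ∣ x`. So the cofactor of `π₁^{a₁}` in `p` is not divisible by `t_α` either: up to a unit, `p`
is `π₁^{a₁}` in `O_{(π₁)}` and `t_α^{a₁}` in `B_α`, where both bases are nonzero nonunits of a
local ring.
-/

open IsLocalRing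
open scoped nonZeroDivisors

section LocalRing

variable {A : Type*} [CommRing A] [IsLocalRing A]

theorem eq_zero_of_mul_dvd_self {x y : A} (hy : ¬ IsUnit y) (h : x * y ∣ x) : x = 0 := by
  obtain ⟨c, hc⟩ := h
  have hyc : y * c ∈ nonunits A := fun hu ↦ hy (isUnit_of_mul_isUnit_left hu)
  have hunit : IsUnit (1 - y * c) := isUnit_one_sub_self_of_mem_nonunits _ hyc
  exact hunit.mul_left_eq_zero.mp (by linear_combination hc)

theorem irreducible_of_prime_of_isLocalRing_s14 {s : A} (hs : Prime s) : Irreducible s := by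
  refine ⟨hs.not_isUnit, fun b c hbc ↦ ?_⟩
  by_contra! ⟨hb, hc⟩
  rcases hs.dvd_or_dvd hbc.dvd with hsb | hsc
  · have hb0 : b = 0 := eq_zero_of_mul_dvd_self hc (hbc ▸ hsb)
    exact hs.ne_zero (by rw [hbc, hb0, zero_mul])
  · have hc0 : c = 0 := eq_zero_of_mul_dvd_self hb (mul_comm b c ▸ hbc ▸ hsc)
    exact hs.ne_zero (by rw [hbc, hc0, mul_zero])

theorem span_singleton_eq_span_unit_mul_pow_iff {w t : A} (hw : IsUnit w) (ht : ¬ IsUnit t)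
    (ht0 : t ≠ 0) {n : ℕ} : Ideal.span {t} = Ideal.span {w * t ^ n} ↔ n = 1 := by
  rw [Ideal.span_singleton_mul_left_unit hw]
  refine ⟨fun h ↦ ?_, fun h ↦ by rw [h, pow_one]⟩
  match n with
  | 0 => exact absurd (Ideal.span_singleton_eq_top.mp (by simpa using h)) ht
  | 1 => rfl
  | n + 2 =>
    have hdvd : t ^ (n + 2) ∣ t := Ideal.span_singleton_le_span_singleton.mp h.le
    have hsq : t * t ∣ t := (Dvd.intro_left (t ^ n) (by ring)).trans hdvd
    exact absurd (eq_zero_of_mul_dvd_self ht hsq) ht0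

theorem algebraMap_adicCompletion_ne_zero {t : A} (hm : maximalIdeal A = Ideal.span {t})
    (ht0 : t ≠ 0) : algebraMap A (AdicCompletion (maximalIdeal A) A) t ≠ 0 := by
  intro h
  have ht : t ∈ maximalIdeal A := hm ▸ Ideal.mem_span_singleton_self t
  have hsq : t ∈ maximalIdeal A ^ 2 := by
    have := congrArg (AdicCompletion.evalₐ (maximalIdeal A) 2) h
    rw [AlgHom.commutes, map_zero] at this
    exact Ideal.Quotient.eq_zero_iff_mem.mp this
  rw [hm, Ideal.span_singleton_pow, Ideal.mem_span_singleton, sq] at hsq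
  exact ht0 (eq_zero_of_mul_dvd_self ht hsq)

end LocalRing

section Localization

variable {R : Type*} [CommRing R] {c t : R} [(Ideal.span {t}).IsPrime]

variable (t) in
theorem maximalIdeal_localization_span_singleton :
    maximalIdeal (Localization.AtPrime (Ideal.span {t})) =
      Ideal.span {algebraMap R (Localization.AtPrime (Ideal.span {t})) t} := by
  rw [← Localization.AtPrime.map_eq_maximalIdeal, Ideal.map_span, Set.image_singleton]

variable (t) in
theorem not_isUnit_algebraMap_localization :
    ¬ IsUnit (algebraMap R (Localization.AtPrime (Ideal.span {t})) t) := by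
  rw [← mem_nonunits_iff, ← mem_maximalIdeal, maximalIdeal_localization_span_singleton]
  exact Ideal.mem_span_singleton_self _

theorem algebraMap_localization_ne_zero (ht : t ∈ R⁰) :
    algebraMap R (Localization.AtPrime (Ideal.span {t})) t ≠ 0 :=
  nonZeroDivisors.ne_zero <|
    IsLocalization.map_nonZeroDivisors_le (Ideal.span {t}).primeCompl _ ⟨t, ht, rfl⟩

theorem isUnit_algebraMap_localization (hc : ¬ t ∣ c) :
    IsUnit (algebraMap R (Localization.AtPrime (Ideal.span {t})) c) :=
  IsLocalization.map_units _
    (⟨c, fun h ↦ hc (Ideal.mem_span_singleton.mp h)⟩ : (Ideal.span {t}).primeCompl)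

theorem maximalIdeal_localization_eq_span_mul_pow_iff (ht : t ∈ R⁰) (hc : ¬ t ∣ c) {n : ℕ} :
    maximalIdeal (Localization.AtPrime (Ideal.span {t})) =
      Ideal.span {algebraMap R (Localization.AtPrime (Ideal.span {t})) (c * t ^ n)} ↔ n = 1 := by
  rw [maximalIdeal_localization_span_singleton, map_mul, map_pow]
  exact span_singleton_eq_span_unit_mul_pow_iff (isUnit_algebraMap_localization hc)
    (not_isUnit_algebraMap_localization t) (algebraMap_localization_ne_zero ht)

theorem span_adicCompletion_localization_eq_span_mul_pow_iff (ht : t ∈ R⁰) (hc : ¬ t ∣ c)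
    {n : ℕ} :
    let A := Localization.AtPrime (Ideal.span {t})
    let B := AdicCompletion (maximalIdeal A) A
    Ideal.span {algebraMap A B (algebraMap R A t)} =
      Ideal.span {algebraMap A B (algebraMap R A (c * t ^ n))} ↔ n = 1 := by
  intro A B
  have hm : maximalIdeal A = Ideal.span {algebraMap R A t} :=
    maximalIdeal_localization_span_singleton t
  have hfg : (maximalIdeal A).FG := hm ▸ Submodule.fg_span_singleton _
  have : IsLocalRing B := AdicCompletion.isLocalRing_of_fg hfg
  have : IsLocalHom (algebraMap A B) := AdicCompletion.algebraMap_isLocalHom_of_fg hfg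
  simp only [map_mul, map_pow]
  refine span_singleton_eq_span_unit_mul_pow_iff ((isUnit_algebraMap_localization hc).map _) ?_
    (algebraMap_adicCompletion_ne_zero hm (algebraMap_localization_ne_zero ht))
  rw [isUnit_map_iff]
  exact not_isUnit_algebraMap_localization t

end Localization

theorem exists_eq_mul_pow_of_eq_unit_mul_prod_pow {M ι : Type*} [CommMonoidWithZero M]
    [Fintype ι] {x : M} {v : Mˣ} {π : ι → M} {a : ι → ℕ} (hx : x = v * ∏ i, π i ^ a i)
    (hirr : ∀ i, Irreducible (π i)) {k : ι} (hk : Prime (π k))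
    (hnonassoc : ∀ i ≠ k, ¬ Associated (π k) (π i)) :
    ∃ c, ¬ π k ∣ c ∧ x = c * π k ^ a k := by
  classical
  refine ⟨v * ∏ i ∈ Finset.univ.erase k, π i ^ a i, fun hdvd ↦ ?_, ?_⟩
  · obtain ⟨i, hi, hdvd⟩ := hk.exists_mem_finset_dvd (v.isUnit.dvd_mul_left.mp hdvd)
    exact hnonassoc i (Finset.ne_of_mem_erase hi)
      ((hirr k).associated_of_dvd (hirr i) (hk.dvd_of_dvd_pow hdvd))
  · rw [hx, mul_assoc, Finset.prod_erase_mul _ _ (Finset.mem_univ k)]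

section Flat

variable {R S : Type*} [CommRing R] [CommRing S] [Algebra R S] [Module.Flat R S]

theorem algebraMap_mem_nonZeroDivisors_of_flat {q : R} (hq : q ∈ R⁰) : algebraMap R S q ∈ S⁰ := by
  have hreg : IsSMulRegular S q := Module.Flat.isSMulRegular_of_nonZeroDivisors hq
  refine mem_nonZeroDivisors_iff_right.mpr fun y hy ↦ hreg ?_
  simpa [Algebra.smul_def, mul_comm] using hy

theorem dvd_of_dvd_algebraMap_of_flat {q x : R} {s t : S} (hq : Prime q)
    (hqs : algebraMap R S q = s * t) (hts : ¬ t ∣ s) (hx : t ∣ algebraMap R S x) : q ∣ x := by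
  obtain ⟨y, hy⟩ := hx
  have hrel : ∑ i, ![x, q] i • ![s, -y] i = 0 := by
    simp only [Fin.sum_univ_two, Matrix.cons_val_zero, Matrix.cons_val_one, Algebra.smul_def,
      hy, hqs]
    ring
  obtain ⟨k, b, z, hz, hb⟩ :=
    Module.Flat.isTrivialRelation_of_sum_smul_eq_zero (f := ![x, q]) (x := ![s, -y]) hrel
  have hs : s = ∑ j, algebraMap R S (b 0 j) * z j := by simpa [Algebra.smul_def] using hz 0
  obtain ⟨j, hj⟩ : ∃ j, ¬ t ∣ algebraMap R S (b 0 j) := by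
    by_contra! h
    exact hts (hs ▸ Finset.dvd_sum fun j _ ↦ (h j).mul_right _)
  have hxb : x * b 0 j + q * b 1 j = 0 := by simpa [Fin.sum_univ_two] using hb j
  have hqxb : q ∣ x * b 0 j := ⟨-b 1 j, by linear_combination hxb⟩
  refine (hq.dvd_or_dvd hqxb).resolve_right fun hqb ↦ hj ?_
  exact (Dvd.intro_left s hqs.symm).trans (map_dvd (algebraMap R S) hqb)

theorem stmt14_general {ι κ : Type*} [Fintype ι] [Fintype κ]
    {x : R} {v : Rˣ} {π : ι → R} {a : ι → ℕ} (hx : x = v * ∏ i, π i ^ a i)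
    (hirr : ∀ i, Irreducible (π i)) {k : ι} (hk : π k ∈ R⁰) [hkp : (Ideal.span {π k}).IsPrime]
    (hnonassoc : ∀ i ≠ k, ¬ Associated (π k) (π i))
    {u : Sˣ} {t : κ → S} (hπ : algebraMap R S (π k) = u * ∏ β, t β)
    (htirr : ∀ β, Irreducible (t β)) {α : κ} [hαp : (Ideal.span {t α}).IsPrime]
    (htnonassoc : ∀ β ≠ α, ¬ Associated (t α) (t β)) :
    let A := Localization.AtPrime (Ideal.span {t α})
    let B := AdicCompletion (maximalIdeal A) A
    (Ideal.span {algebraMap A B (algebraMap S A (t α))} =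
        Ideal.span {algebraMap A B (algebraMap S A (algebraMap R S x))} ↔ a k = 1) ∧
      (Ideal.span {algebraMap A B (algebraMap S A (t α))} =
          Ideal.span {algebraMap A B (algebraMap S A (algebraMap R S x))} ↔
        maximalIdeal (Localization.AtPrime (Ideal.span {π k})) =
          Ideal.span {algebraMap R (Localization.AtPrime (Ideal.span {π k})) x}) := by
  intro A B
  have hπk : Prime (π k) := (Ideal.span_singleton_prime (hirr k).ne_zero).mp hkp
  have htα : Prime (t α) := (Ideal.span_singleton_prime (htirr α).ne_zero).mp hαp
  obtain ⟨c, hc, hxc⟩ := exists_eq_mul_pow_of_eq_unit_mul_prod_pow hx hirr hπk hnonassoc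
  obtain ⟨s, hs, hπs⟩ := exists_eq_mul_pow_of_eq_unit_mul_prod_pow (a := fun _ ↦ 1)
    (by simpa only [pow_one] using hπ) htirr htα htnonassoc
  rw [pow_one] at hπs
  have htNZD : t α ∈ S⁰ :=
    (mul_mem_nonZeroDivisors.mp (hπs ▸ algebraMap_mem_nonZeroDivisors_of_flat hk)).2
  have hcs : ¬ t α ∣ algebraMap R S c * s ^ a k := fun h ↦ (htα.dvd_or_dvd h).elim
    (fun h ↦ hc (dvd_of_dvd_algebraMap_of_flat hπk hπs hs h)) (fun h ↦ hs (htα.dvd_of_dvd_pow h))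
  have hxS : algebraMap R S x = algebraMap R S c * s ^ a k * t α ^ a k := by
    rw [hxc, map_mul, map_pow, hπs, mul_pow, mul_assoc]
  have hB : Ideal.span {algebraMap A B (algebraMap S A (t α))} =
      Ideal.span {algebraMap A B (algebraMap S A (algebraMap R S x))} ↔ a k = 1 :=
    hxS ▸ span_adicCompletion_localization_eq_span_mul_pow_iff htNZD hcs
  exact ⟨hB, hB.trans (hxc ▸ maximalIdeal_localization_eq_span_mul_pow_iff hk hc).symm⟩

end Flat

theorem stmt14 (O : Type*) [CommRing O] [IsDomain O] [IsLocalRing O]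
    (hreg : IsRegularLocal O) (hdim : ringKrullDim O = 2)
    (hflat : Module.Flat ℤ O)
    (p : ℕ) (hp : p.Prime)
    [Finite (IsLocalRing.ResidueField O)] [CharP (IsLocalRing.ResidueField O) p]
    -- the factorization `p = v·∏ᵢ πᵢ^{aᵢ}` in `O`, with the `πᵢ` pairwise non-associate
    -- irreducible elements and `π₁ = π 0` generating a prime ideal
    (j : ℕ) (hj : 0 < j) (v : Oˣ) (π : Fin j → O) (a : Fin j → ℕ)
    (hirr : ∀ i, Irreducible (π i))
    (hnonassoc : ∀ i i', i ≠ i' → ¬ Associated (π i) (π i'))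
    (hfact : (p : O) = (v : O) * ∏ i, π i ^ a i)
    (hπ₁ : (Ideal.span {π ⟨0, hj⟩}).IsPrime)
    -- the factorization `π₁ = u·t₁⋯t_m` into pairwise non-associate primes in `Ô`
    (m : ℕ) (u : (AdicCompletion (IsLocalRing.maximalIdeal O) O)ˣ)
    (t : Fin m → AdicCompletion (IsLocalRing.maximalIdeal O) O)
    (ht : ∀ α, Prime (t α))
    (htnonassoc : ∀ α α', α ≠ α' → ¬ Associated (t α) (t α'))
    (hfact' : algebraMap O (AdicCompletion (IsLocalRing.maximalIdeal O) O) (π ⟨0, hj⟩) =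
      (u : AdicCompletion (IsLocalRing.maximalIdeal O) O) * ∏ α, t α)
    -- fix a branch `α`
    (α : Fin m) :
    -- `B_α` is the completion of the localization of `Ô` at the height-one prime `(t_α)`
    letI hpα : (Ideal.span {t α}).IsPrime :=
      (Ideal.span_singleton_prime (ht α).ne_zero).mpr (ht α)
    let Oloc := Localization.AtPrime (Ideal.span {t α})
    let Bα := AdicCompletion (IsLocalRing.maximalIdeal Oloc) Oloc
    letI hπp : (Ideal.span {π ⟨0, hj⟩}).IsPrime := hπ₁
    ((Ideal.span {algebraMap Oloc Bα
          (algebraMap (AdicCompletion (IsLocalRing.maximalIdeal O) O) Oloc (t α))} =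
        Ideal.span {(p : Bα)}) ↔ a ⟨0, hj⟩ = 1) ∧
    ((Ideal.span {algebraMap Oloc Bα
          (algebraMap (AdicCompletion (IsLocalRing.maximalIdeal O) O) Oloc (t α))} =
        Ideal.span {(p : Bα)}) ↔
      IsLocalRing.maximalIdeal (Localization.AtPrime (Ideal.span {π ⟨0, hj⟩})) =
        Ideal.span {(p : Localization.AtPrime (Ideal.span {π ⟨0, hj⟩}))}) := by
  have : IsNoetherianRing O := hreg.1
  have : (Ideal.span {t α}).IsPrime := (Ideal.span_singleton_prime (ht α).ne_zero).mpr (ht α)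
  simpa only [map_natCast] using stmt14_general hfact hirr
    (mem_nonZeroDivisors_of_ne_zero (hirr _).ne_zero) (fun i hi ↦ hnonassoc _ i hi.symm)
    hfact' (fun β ↦ irreducible_of_prime_of_isLocalRing_s14 (ht β)) (fun β hβ ↦ htnonassoc α β hβ.symm)
end
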